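/- Odd reflection boundary estimate: Let B be a ball centered on the hyperplane {x_n = 0}, B⁺ = B ∩ {x_n > 0}, and let v ∈ H²(B⁺)∩H_0¹(B⁺) with Δv ∈ H_0¹(B⁺) vanish (with ∇v and Δv) near the curved part of ∂B⁺. Let A_0 be constant, symmetric, positive definite with smallest eigenvalue ≥ λ. Then √ε‖∇Δv‖_{L²(B⁺)} + √λ‖D²v‖_{L²(B⁺)} ≤ C‖L_0^ε v‖_{L²(B⁺)}, with C independent of ε. -/

import Mathlib

open MeasureTheory Real Filter Bornology
open scoped InnerProductSpace

noncomputable section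

/-- Euclidean space `ℝⁿ`. -/
abbrev Euc (n : ℕ) := EuclideanSpace ℝ (Fin n)

variable {n : ℕ}

/-- First partial derivative `v_{x_i}`. -/
def pd (i : Fin n) (v : Euc n → ℝ) (x : Euc n) : ℝ :=
  fderiv ℝ v x (EuclideanSpace.single i 1)

/-- Second partial derivative `v_{x_i x_j}`. -/
def pd2 (i j : Fin n) (v : Euc n → ℝ) (x : Euc n) : ℝ := pd i (pd j v) x

/-- Laplacian `Δv`. -/
def lap (v : Euc n → ℝ) (x : Euc n) : ℝ := ∑ i, pd2 i i v x

/-- Squared `L²(s)` norm. -/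
def L2sq (s : Set (Euc n)) (g : Euc n → ℝ) : ℝ := ∫ x in s, (g x) ^ 2

/-- `L²(s)` norm. -/
def L2norm (s : Set (Euc n)) (g : Euc n → ℝ) : ℝ := Real.sqrt (L2sq s g)

/-- Squared `L²(s)` norm of the gradient, `‖∇v‖²_{L²(s)}`. -/
def gradL2sq (s : Set (Euc n)) (v : Euc n → ℝ) : ℝ := ∑ i, L2sq s (pd i v)

/-- Squared `L²(s)` norm of the Hessian, `‖D²v‖²_{L²(s)}`. -/
def hessL2sq (s : Set (Euc n)) (v : Euc n → ℝ) : ℝ := ∑ i, ∑ j, L2sq s (pd2 i j v)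

/-- The `H²(s)` norm. -/
def H2N (s : Set (Euc n)) (v : Euc n → ℝ) : ℝ :=
  Real.sqrt (L2sq s v + gradL2sq s v + hessL2sq s v)

/-- The `H^{-1}(s)` norm: sup of pairings against smooth compactly supported test
functions in `s`, normalized by the gradient `L²` norm. -/
def Hneg1 (s : Set (Euc n)) (g : Euc n → ℝ) : ℝ :=
  sSup {t | ∃ φ : Euc n → ℝ, ContDiff ℝ (⊤ : ℕ∞) φ ∧ HasCompactSupport φ ∧
    tsupport φ ⊆ s ∧ φ ≠ 0 ∧ t = (∫ x in s, g x * φ x) / Real.sqrt (gradL2sq s φ)}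

/-- `∂Ω ∈ C^k`: local C^k defining functions. -/
def BoundaryCk (k : ℕ) (Ω : Set (Euc n)) : Prop :=
  ∀ x ∈ frontier Ω, ∃ (U : Set (Euc n)) (g : Euc n → ℝ), IsOpen U ∧ x ∈ U ∧
    ContDiff ℝ k g ∧ (∀ y ∈ U, (y ∈ Ω ↔ g y < 0)) ∧
    ∀ y ∈ U, y ∈ frontier Ω → fderiv ℝ g y ≠ 0

/-- `∂Ω ∈ C^{2,1}`: local C² defining functions with Lipschitz second derivatives. -/
def BoundaryC21 (Ω : Set (Euc n)) : Prop :=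
  ∀ x ∈ frontier Ω, ∃ (U : Set (Euc n)) (g : Euc n → ℝ) (M : NNReal), IsOpen U ∧ x ∈ U ∧
    ContDiff ℝ 2 g ∧ LipschitzWith M (iteratedFDeriv ℝ 2 g) ∧
    (∀ y ∈ U, (y ∈ Ω ↔ g y < 0)) ∧
    ∀ y ∈ U, y ∈ frontier Ω → fderiv ℝ g y ≠ 0

/-- The pairing `(L_h^ε v, w) = ε(Δv, Δw) − (A:D²v, w)` over `Ω`. -/
def pairLh (Ω : Set (Euc n)) (A : Euc n → Matrix (Fin n) (Fin n) ℝ) (ε : ℝ)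
    (v w : Euc n → ℝ) : ℝ :=
  ε * (∫ x in Ω, lap v x * lap w x) -
    ∫ x in Ω, (∑ i, ∑ j, A x i j * pd2 i j v x) * w x

/-- The discrete dual norm `‖L_h^ε v‖_{L_h²(Ω)}`. -/
def Lh2N (Ω : Set (Euc n)) (A : Euc n → Matrix (Fin n) (Fin n) ℝ) (ε : ℝ)
    (Vh : Submodule ℝ (Euc n → ℝ)) (v : Euc n → ℝ) : ℝ :=
  sSup {t | ∃ w, w ∈ Vh ∧ w ≠ 0 ∧ t = pairLh Ω A ε v w / L2norm Ω w}

/-! Test `L₀^ε v = εΔ²v - A : D²v` against `-Δv`. Since `Δv` vanishes on the flat part of the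
boundary and near the curved part, Green's identity turns the fourth-order term into `ε‖∇Δv‖²`.
Integrating by parts twice gives `∫ v_ij v_ll = ∫ v_il v_jl`: the boundary terms on the flat part
drop out because each contains a tangential derivative of a function vanishing there. Hence
`∫ (A : D²v) Δv` is the sum over `l` of the integrals of the quadratic form of `A` at `∇v_l`, and
ellipticity bounds it below by `λ‖D²v‖²`. Young's inequality and `|Δv|² ≤ n|D²v|²` absorb `Δv`
into the Hessian term, leaving a constant that depends only on `n / λ`. -/

/-- The open half-space `{x_k > 0}` of `ℝⁿ`; the half ball `B⁺` is its intersection with a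
ball. -/
def upperHalfSpace (k : Fin n) : Set (Euc n) := {x | 0 < x k}

lemma isOpen_upperHalfSpace (k : Fin n) : IsOpen (upperHalfSpace k) :=
  isOpen_lt continuous_const (by fun_prop)

lemma mem_closure_upperHalfSpace {k : Fin n} {x : Euc n} :
    x ∈ closure (upperHalfSpace k) ↔ 0 ≤ x k := by
  simp [upperHalfSpace, closure_open_halfSpace]

section PartialDerivatives

variable {f g : Euc n → ℝ} {m p : WithTop ℕ∞} {i k : Fin n}

lemma contDiff_pd (hf : ContDiff ℝ p f) (hmp : m + 1 ≤ p) (i : Fin n) : ContDiff ℝ m (pd i f) :=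
  (hf.fderiv_right hmp).clm_apply contDiff_const

lemma contDiff_pd2 (hf : ContDiff ℝ p f) (hmp : m + 2 ≤ p) (i j : Fin n) :
    ContDiff ℝ m (pd2 i j f) :=
  contDiff_pd (contDiff_pd hf (by rwa [add_assoc, one_add_one_eq_two]) j) le_rfl i

lemma contDiff_lap (hf : ContDiff ℝ p f) (hmp : m + 2 ≤ p) : ContDiff ℝ m (lap f) :=
  ContDiff.sum fun i _ => contDiff_pd2 hf hmp i i

lemma pd_mul (hf : Differentiable ℝ f) (hg : Differentiable ℝ g) (i : Fin n) (x : Euc n) :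
    pd i (fun y => f y * g y) x = f x * pd i g x + pd i f x * g x := by
  simp [pd, fderiv_fun_mul (hf x) (hg x), mul_comm]

lemma pd2_comm (hf : ContDiff ℝ 2 f) (i j : Fin n) : pd2 i j f = pd2 j i f := by
  funext x
  have hdiff : DifferentiableAt ℝ (fderiv ℝ f) x :=
    (hf.fderiv_right (m := 1) (by norm_num)).differentiable one_ne_zero x
  have pd2_eq (a b : Fin n) : pd2 a b f x =
      fderiv ℝ (fderiv ℝ f) x (EuclideanSpace.single a 1) (EuclideanSpace.single b 1) := by
    change fderiv ℝ (fun y => fderiv ℝ f y (EuclideanSpace.single b 1)) x _ = _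
    simp [fderiv_clm_apply hdiff (differentiableAt_const _)]
  rw [pd2_eq, pd2_eq]
  exact hf.contDiffAt.isSymmSndFDerivAt (by simp) _ _

lemma eqOn_pd_of_eqOn_zero {Ω K : Set (Euc n)} (hΩ : IsOpen Ω) (hK : IsClosed K)
    (hf : ContDiff ℝ 1 f) (hzero : Set.EqOn f 0 (closure Ω \ K)) (i : Fin n) :
    Set.EqOn (pd i f) 0 (closure Ω \ K) := by
  have hinterior : Set.EqOn (pd i f) 0 (Ω \ K) := fun x hx => by
    have : f =ᶠ[nhds x] fun _ => 0 := by
      filter_upwards [(hΩ.sdiff hK).mem_nhds hx] with y hy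
      exact hzero ⟨subset_closure hy.1, hy.2⟩
    simp [pd, this.fderiv_eq]
  refine (hinterior.closure (contDiff_pd hf (m := 0) (by simp) i).continuous
    continuous_const).mono ?_
  simpa only [Set.sdiff_eq, Set.inter_comm] using hK.isOpen_compl.inter_closure (t := Ω)

lemma eqOn_pd2_of_eqOn_zero {Ω K : Set (Euc n)} (hΩ : IsOpen Ω) (hK : IsClosed K)
    (hf : ContDiff ℝ 2 f) (hzero : Set.EqOn f 0 (closure Ω \ K)) (i j : Fin n) :
    Set.EqOn (pd2 i j f) 0 (closure Ω \ K) :=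
  eqOn_pd_of_eqOn_zero hΩ hK (contDiff_pd hf (by norm_num) j)
    (eqOn_pd_of_eqOn_zero hΩ hK (hf.of_le (by norm_num)) hzero j) i

lemma eqOn_lap_of_eqOn_zero {Ω K : Set (Euc n)} (hΩ : IsOpen Ω) (hK : IsClosed K)
    (hf : ContDiff ℝ 2 f) (hzero : Set.EqOn f 0 (closure Ω \ K)) :
    Set.EqOn (lap f) 0 (closure Ω \ K) := fun _ hx =>
  Finset.sum_eq_zero fun i _ => eqOn_pd2_of_eqOn_zero hΩ hK hf hzero i i hx

lemma eqOn_pd_of_eqOn_zero_hyperplane (hf : Differentiable ℝ f)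
    (hzero : Set.EqOn f 0 {x | x k = 0}) (hik : i ≠ k) : Set.EqOn (pd i f) 0 {x | x k = 0} := by
  intro x (hx : x k = 0)
  have hline : (fun t : ℝ => f (x + t • EuclideanSpace.single i 1)) = 0 :=
    funext fun t => hzero (by simp [hx, hik.symm])
  rw [pd, ← (hf x).lineDeriv_eq_fderiv, lineDeriv, hline]
  simp

end PartialDerivatives

lemma integrableOn_of_isBounded {s : Set (Euc n)} (hs : IsBounded s) {f : Euc n → ℝ}
    (hf : Continuous f) : IntegrableOn f s :=
  (hf.continuousOn.integrableOn_compact hs.isCompact_closure).mono_set subset_closure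

section IntegrationByParts

lemma setIntegral_Icc_fderiv_single {m : ℕ} {a b : Fin (m + 1) → ℝ} (hab : a ≤ b)
    {f : (Fin (m + 1) → ℝ) → ℝ} (hf : ContDiff ℝ 1 f) (i : Fin (m + 1)) :
    ∫ x in Set.Icc a b, fderiv ℝ f x (Pi.single i 1) =
      (∫ y in Set.Icc (a ∘ i.succAbove) (b ∘ i.succAbove), f (i.insertNth (b i) y)) -
        ∫ y in Set.Icc (a ∘ i.succAbove) (b ∘ i.succAbove), f (i.insertNth (a i) y) := by
  have hderiv (x : Fin (m + 1) → ℝ) :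
      ∑ j, (Pi.single i (fderiv ℝ f) : Fin (m + 1) → _ → _ →L[ℝ] ℝ) j x (Pi.single j 1) =
        fderiv ℝ f x (Pi.single i 1) := by
    rw [Finset.sum_eq_single i (fun j _ hj => by simp [Pi.single_eq_of_ne hj]) (by simp),
      Pi.single_eq_same]
  have hcont : Continuous fun x => fderiv ℝ f x (Pi.single i 1) :=
    (hf.continuous_fderiv one_ne_zero).clm_apply continuous_const
  have hdiv := integral_divergence_of_hasFDerivAt_off_countable' a b hab (Pi.single i f)
    (Pi.single i (fderiv ℝ f)) ∅ Set.countable_empty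
    (fun j => by
      obtain rfl | hj := eq_or_ne j i
      · simpa using hf.continuous.continuousOn
      · rw [Pi.single_eq_of_ne hj]
        exact continuousOn_const)
    (fun x _ j => by
      obtain rfl | hj := eq_or_ne j i
      · simpa using (hf.differentiable one_ne_zero x).hasFDerivAt
      · rw [Pi.single_eq_of_ne hj, Pi.single_eq_of_ne hj]
        exact hasFDerivAt_const (0 : ℝ) x)
    (by simpa only [hderiv] using hcont.continuousOn.integrableOn_compact isCompact_Icc)
  simp only [hderiv] at hdiv
  rw [hdiv, Finset.sum_eq_single i (fun j _ hj => by simp [hj]) (by simp), Pi.single_eq_same]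

lemma setIntegral_Icc_fderiv_single_eq_zero {a b : Fin n → ℝ} (hab : a ≤ b)
    {f : (Fin n → ℝ) → ℝ} (hf : ContDiff ℝ 1 f) (i : Fin n)
    (hface : ∀ x ∈ Set.Icc a b, x i = a i ∨ x i = b i → f x = 0) :
    ∫ x in Set.Icc a b, fderiv ℝ f x (Pi.single i 1) = 0 := by
  cases n with
  | zero => exact i.elim0
  | succ m =>
    have hzero {t : ℝ} (ht : t = a i ∨ t = b i) (y : Fin m → ℝ)
        (hy : y ∈ Set.Icc (a ∘ i.succAbove) (b ∘ i.succAbove)) : f (i.insertNth t y) = 0 := by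
      refine hface _ (Fin.insertNth_mem_Icc.2 ⟨?_, hy⟩) (by simpa using ht)
      rcases ht with rfl | rfl
      exacts [⟨le_rfl, hab i⟩, ⟨hab i, le_rfl⟩]
    rw [setIntegral_Icc_fderiv_single hab hf,
      setIntegral_eq_zero_of_forall_eq_zero (hzero (.inr rfl)),
      setIntegral_eq_zero_of_forall_eq_zero (hzero (.inl rfl)), sub_zero]

lemma setIntegral_box_pd_eq_zero {a b : Fin n → ℝ} (hab : a ≤ b) {f : Euc n → ℝ}
    (hf : ContDiff ℝ 1 f) (i : Fin n)
    (hface : ∀ x : Euc n, (∀ j, x j ∈ Set.Icc (a j) (b j)) → x i = a i ∨ x i = b i → f x = 0) :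
    ∫ x in {x : Euc n | ∀ j, x j ∈ Set.Ioc (a j) (b j)}, pd i f x = 0 := by
  have hpd (y : Fin n → ℝ) : pd i f (WithLp.toLp 2 y) =
      fderiv ℝ (f ∘ WithLp.toLp 2) y (Pi.single i 1) := by
    have hchain := ((hf.differentiable one_ne_zero _).hasFDerivAt.comp y
      (PiLp.continuousLinearEquiv 2 ℝ (fun _ : Fin n => ℝ)).symm.hasFDerivAt).fderiv
    exact (DFunLike.congr_fun hchain (Pi.single i 1)).symm
  have hbox : WithLp.toLp 2 ⁻¹' {x : Euc n | ∀ j, x j ∈ Set.Ioc (a j) (b j)} =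
      Set.univ.pi fun j => Set.Ioc (a j) (b j) := by
    ext y
    simp [Set.mem_pi]
  rw [← (PiLp.volume_preserving_toLp (Fin n)).setIntegral_preimage_emb
    (MeasurableEquiv.toLp 2 (Fin n → ℝ)).measurableEmbedding, hbox, volume_pi,
    setIntegral_congr_set Measure.univ_pi_Ioc_ae_eq_Icc]
  simp only [hpd]
  refine setIntegral_Icc_fderiv_single_eq_zero hab
    (hf.comp (PiLp.continuousLinearEquiv 2 ℝ (fun _ : Fin n => ℝ)).symm.contDiff) i ?_
  exact fun y hy => hface _ fun j => ⟨hy.1 j, hy.2 j⟩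

variable {k : Fin n} {K : Set (Euc n)}

lemma integral_pd_eq_zero (hK : IsCompact K) {f : Euc n → ℝ} (hf : ContDiff ℝ 1 f)
    (hsupp : Set.EqOn f 0 (closure (upperHalfSpace k) \ K)) (i : Fin n)
    (hbd : i = k → Set.EqOn f 0 {x | x k = 0}) :
    ∫ x in K ∩ upperHalfSpace k, pd i f x = 0 := by
  obtain ⟨R, hR, hKR⟩ := hK.isBounded.subset_ball_lt 0 0
  have hcoord {x : Euc n} (hx : x ∈ K) (j : Fin n) : |x j| < R :=
    (PiLp.norm_apply_le x j).trans_lt (mem_ball_zero_iff.1 (hKR hx))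
  let a : Fin n → ℝ := Function.update (fun _ => -R) k 0
  have hab : a ≤ fun _ => R := by
    intro j
    obtain rfl | hj := eq_or_ne j k
    · simpa [a] using hR.le
    · simp [a, hj, hR.le]
  have hvanish {x : Euc n} (hx : ∀ j, x j ∈ Set.Icc (a j) R) (hxK : x ∉ K) : f x = 0 :=
    hsupp ⟨mem_closure_upperHalfSpace.2 (by simpa [a] using (hx k).1), hxK⟩
  have hbox : ∫ x in {x : Euc n | ∀ j, x j ∈ Set.Ioc (a j) R}, pd i f x = 0 := by
    refine setIntegral_box_pd_eq_zero hab hf i fun x hx hface => ?_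
    rcases hface with hlow | hhigh
    · obtain rfl | hik := eq_or_ne i k
      · exact hbd rfl (by simpa [a] using hlow)
      · refine hvanish hx fun hxK => (hcoord hxK i).ne ?_
        simp [hlow, a, hik, hR.le]
    · exact hvanish hx fun hxK => (hcoord hxK i).ne (by rw [hhigh, abs_of_pos hR])
  rw [← hbox]
  refine (setIntegral_eq_of_subset_of_forall_sdiff_eq_zero ?_ ?_ ?_).symm
  · measurability
  · rintro x ⟨hxK, hxk⟩ j
    obtain ⟨hneg, hpos⟩ := abs_lt.1 (hcoord hxK j)
    obtain rfl | hj := eq_or_ne j k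
    · simpa [a] using ⟨hxk, hpos.le⟩
    · simpa [a, hj] using ⟨hneg, hpos.le⟩
  · rintro x ⟨hx, hxKH⟩
    have hxk : x ∈ upperHalfSpace k := by simpa [upperHalfSpace, a] using (hx k).1
    exact eqOn_pd_of_eqOn_zero (isOpen_upperHalfSpace k) hK.isClosed hf hsupp i
      ⟨subset_closure hxk, fun hxK => hxKH ⟨hxK, hxk⟩⟩

lemma integral_mul_pd (hK : IsCompact K) {f g : Euc n → ℝ} (hf : ContDiff ℝ 1 f)
    (hg : ContDiff ℝ 1 g) (hsupp : Set.EqOn f 0 (closure (upperHalfSpace k) \ K)) (i : Fin n)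
    (hbd : i = k → ∀ x : Euc n, x k = 0 → f x * g x = 0) :
    ∫ x in K ∩ upperHalfSpace k, f x * pd i g x =
      -∫ x in K ∩ upperHalfSpace k, pd i f x * g x := by
  have hbdd : IsBounded (K ∩ upperHalfSpace k) := hK.isBounded.subset Set.inter_subset_left
  have hf' : Continuous (pd i f) := (contDiff_pd hf (m := 0) (by simp) i).continuous
  have hg' : Continuous (pd i g) := (contDiff_pd hg (m := 0) (by simp) i).continuous
  have hprod : ∫ x in K ∩ upperHalfSpace k, pd i (fun y => f y * g y) x = 0 :=
    integral_pd_eq_zero hK (hf.mul hg) (fun x hx => by simp [hsupp hx]) i hbd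
  simp only [pd_mul (hf.differentiable one_ne_zero) (hg.differentiable one_ne_zero)] at hprod
  rw [integral_add (integrableOn_of_isBounded hbdd (by fun_prop))
    (integrableOn_of_isBounded hbdd (by fun_prop))] at hprod
  exact eq_neg_of_add_eq_zero_left hprod

lemma integral_mul_lap_self (hK : IsCompact K) {w : Euc n → ℝ} (hw : ContDiff ℝ 2 w)
    (hsupp : Set.EqOn w 0 (closure (upperHalfSpace k) \ K))
    (hbd : Set.EqOn w 0 {x | x k = 0}) :
    ∫ x in K ∩ upperHalfSpace k, w x * lap w x = -gradL2sq (K ∩ upperHalfSpace k) w := by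
  have hbdd : IsBounded (K ∩ upperHalfSpace k) := hK.isBounded.subset Set.inter_subset_left
  have hpd2 (i : Fin n) : Continuous (pd2 i i w) :=
    (contDiff_pd2 hw (m := 0) (by simp) i i).continuous
  simp only [lap, Finset.mul_sum]
  rw [integral_finsetSum _ fun i _ => integrableOn_of_isBounded hbdd (by fun_prop), gradL2sq,
    ← Finset.sum_neg_distrib]
  refine Finset.sum_congr rfl fun i _ => ?_
  simp only [L2sq, sq]
  exact integral_mul_pd hK (hw.of_le (by norm_num)) (contDiff_pd hw (by norm_num) i) hsupp i
    fun _ x hx => by simp [hbd hx]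

lemma integral_pd2_mul_pd2 (hK : IsCompact K) {v : Euc n → ℝ} (hv : ContDiff ℝ 3 v)
    (hsupp : Set.EqOn v 0 (closure (upperHalfSpace k) \ K))
    (hbd : Set.EqOn v 0 {x | x k = 0}) (i j l : Fin n) :
    ∫ x in K ∩ upperHalfSpace k, pd2 i j v x * pd2 l l v x =
      ∫ x in K ∩ upperHalfSpace k, pd2 i l v x * pd2 j l v x := by
  have hv2 : ContDiff ℝ 2 v := hv.of_le (by norm_num)
  obtain rfl | hil := eq_or_ne i l
  · simp only [pd2_comm hv2 i j, mul_comm]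
  obtain rfl | hjl := eq_or_ne j l
  · rfl
  have hpd (a : Fin n) : ContDiff ℝ 2 (pd a v) := contDiff_pd hv (by norm_num) a
  have hpd2 (a b : Fin n) : ContDiff ℝ 1 (pd2 a b v) := contDiff_pd2 hv (by norm_num) a b
  have hpd_bd {a : Fin n} (ha : a ≠ k) : Set.EqOn (pd a v) 0 {x | x k = 0} :=
    eqOn_pd_of_eqOn_zero_hyperplane (hv.differentiable (by simp)) hbd ha
  have hpd2_supp (a b : Fin n) : Set.EqOn (pd2 a b v) 0 (closure (upperHalfSpace k) \ K) :=
    eqOn_pd2_of_eqOn_zero (isOpen_upperHalfSpace k) hK.isClosed hv2 hsupp a b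
  -- Both integrations by parts leave no boundary term on `x_k = 0`: when `k = l`, the direction
  -- `i` is tangential to the hyperplane and kills `v_ij`; when `k = i`, `l` is, and `v_l = 0`.
  have hbd_l : l = k → ∀ x : Euc n, x k = 0 → pd2 i j v x * pd l v x = 0 := by
    rintro rfl x hx
    have hij : pd2 i j v x = 0 := eqOn_pd_of_eqOn_zero_hyperplane
      ((hpd j).differentiable two_ne_zero) (hpd_bd hjl) hil hx
    rw [hij, zero_mul]
  have hbd_i : i = k → ∀ x : Euc n, x k = 0 → pd2 l j v x * pd l v x = 0 := by
    rintro rfl x hx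
    rw [hpd_bd hil.symm hx, Pi.zero_apply, mul_zero]
  have hthird : pd l (pd2 i j v) = pd i (pd2 l j v) := pd2_comm (hpd j) l i
  calc ∫ x in K ∩ upperHalfSpace k, pd2 i j v x * pd2 l l v x
      = -∫ x in K ∩ upperHalfSpace k, pd l (pd2 i j v) x * pd l v x :=
        integral_mul_pd hK (hpd2 i j) ((hpd l).of_le (by norm_num)) (hpd2_supp i j) l hbd_l
    _ = -∫ x in K ∩ upperHalfSpace k, pd i (pd2 l j v) x * pd l v x := by rw [hthird]
    _ = ∫ x in K ∩ upperHalfSpace k, pd2 l j v x * pd2 i l v x :=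
        (integral_mul_pd hK (hpd2 l j) ((hpd l).of_le (by norm_num)) (hpd2_supp l j) i
          hbd_i).symm
    _ = ∫ x in K ∩ upperHalfSpace k, pd2 i l v x * pd2 j l v x := by
        simp only [pd2_comm hv2 l j, mul_comm]

end IntegrationByParts

section L2Norms

variable {s : Set (Euc n)} {f g : Euc n → ℝ}

lemma L2sq_nonneg : 0 ≤ L2sq s f := integral_nonneg fun _ => sq_nonneg _

lemma gradL2sq_nonneg : 0 ≤ gradL2sq s f := Finset.sum_nonneg fun _ _ => L2sq_nonneg

lemma hessL2sq_nonneg : 0 ≤ hessL2sq s f :=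
  Finset.sum_nonneg fun _ _ => Finset.sum_nonneg fun _ _ => L2sq_nonneg

lemma two_mul_integral_mul_le (hs : IsBounded s) (hf : Continuous f) (hg : Continuous g) {t : ℝ}
    (ht : 0 < t) : 2 * ∫ x in s, f x * g x ≤ t * L2sq s f + t⁻¹ * L2sq s g := by
  simp only [L2sq, ← integral_const_mul]
  rw [← integral_add (integrableOn_of_isBounded hs (by fun_prop))
    (integrableOn_of_isBounded hs (by fun_prop))]
  refine integral_mono (integrableOn_of_isBounded hs (by fun_prop))
    (integrableOn_of_isBounded hs (by fun_prop)) fun x => ?_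
  have hsq : t * f x ^ 2 + t⁻¹ * g x ^ 2 - 2 * (f x * g x) = t⁻¹ * (t * f x - g x) ^ 2 := by
    field_simp
    ring
  have : 0 ≤ t⁻¹ * (t * f x - g x) ^ 2 := by positivity
  linarith

lemma L2sq_lap_le (hs : IsBounded s) (hf : ContDiff ℝ 2 f) :
    L2sq s (lap f) ≤ n * hessL2sq s f := by
  have hpd2 (i j : Fin n) : Continuous (pd2 i j f) :=
    (contDiff_pd2 hf (m := 0) (by simp) i j).continuous
  have hlap : Continuous (lap f) := (contDiff_lap hf (m := 0) (by simp)).continuous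
  calc L2sq s (lap f) ≤ ∫ x in s, n * ∑ i, pd2 i i f x ^ 2 := by
        refine integral_mono (integrableOn_of_isBounded hs (by fun_prop))
          (integrableOn_of_isBounded hs (by fun_prop)) fun x => ?_
        simpa [lap] using sq_sum_le_card_mul_sum_sq (s := Finset.univ) (f := fun i => pd2 i i f x)
    _ = n * ∑ i, L2sq s (pd2 i i f) := by
        rw [integral_const_mul,
          integral_finsetSum _ fun i _ => integrableOn_of_isBounded hs (by fun_prop)]
        rfl
    _ ≤ n * hessL2sq s f := by
        unfold hessL2sq
        gcongr with i
        exact Finset.single_le_sum (f := fun j => L2sq s (pd2 i j f)) (fun _ _ => L2sq_nonneg)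
          (Finset.mem_univ i)

lemma L2sq_inter_of_eqOn_zero {k : Fin n} (hf : Set.EqOn f 0 (upperHalfSpace k \ s)) :
    L2sq (s ∩ upperHalfSpace k) f = L2sq (upperHalfSpace k) f := by
  have hmeas : MeasurableSet (upperHalfSpace k) := (isOpen_upperHalfSpace k).measurableSet
  rw [L2sq, ← setIntegral_indicator hmeas, L2sq, ← integral_indicator hmeas]
  refine setIntegral_eq_integral_of_forall_compl_eq_zero fun x hx => ?_
  rw [Set.indicator_apply_eq_zero]
  exact fun hxk => by simp [hf ⟨hxk, hx⟩]

lemma L2sq_inter_eq_of_subset {k : Fin n} {K : Set (Euc n)} (hKs : K ⊆ s)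
    (hf : Set.EqOn f 0 (closure (upperHalfSpace k) \ K)) :
    L2sq (s ∩ upperHalfSpace k) f = L2sq (K ∩ upperHalfSpace k) f := by
  have hfK : Set.EqOn f 0 (upperHalfSpace k \ K) :=
    hf.mono (Set.sdiff_subset_sdiff_left subset_closure)
  rw [L2sq_inter_of_eqOn_zero hfK,
    L2sq_inter_of_eqOn_zero (hfK.mono (Set.sdiff_subset_sdiff_right hKs))]

lemma gradL2sq_inter_eq_of_subset {k : Fin n} {K : Set (Euc n)} (hK : IsClosed K) (hKs : K ⊆ s)
    (hf : ContDiff ℝ 1 f) (hsupp : Set.EqOn f 0 (closure (upperHalfSpace k) \ K)) :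
    gradL2sq (s ∩ upperHalfSpace k) f = gradL2sq (K ∩ upperHalfSpace k) f :=
  Finset.sum_congr rfl fun i _ => L2sq_inter_eq_of_subset hKs
    (eqOn_pd_of_eqOn_zero (isOpen_upperHalfSpace k) hK hf hsupp i)

lemma hessL2sq_inter_eq_of_subset {k : Fin n} {K : Set (Euc n)} (hK : IsClosed K) (hKs : K ⊆ s)
    (hf : ContDiff ℝ 2 f) (hsupp : Set.EqOn f 0 (closure (upperHalfSpace k) \ K)) :
    hessL2sq (s ∩ upperHalfSpace k) f = hessL2sq (K ∩ upperHalfSpace k) f :=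
  Finset.sum_congr rfl fun i _ => Finset.sum_congr rfl fun j _ => L2sq_inter_eq_of_subset hKs
    (eqOn_pd2_of_eqOn_zero (isOpen_upperHalfSpace k) hK hf hsupp i j)

end L2Norms

section ConstantCoefficients

/-- The constant-coefficient operator `L_0^ε v = εΔ²v − A:D²v`. -/
def constCoeffOp (A : Matrix (Fin n) (Fin n) ℝ) (ε : ℝ) (v : Euc n → ℝ) (x : Euc n) : ℝ :=
  ε * lap (lap v) x - ∑ i, ∑ j, A i j * pd2 i j v x

variable {k : Fin n} {K : Set (Euc n)} {A : Matrix (Fin n) (Fin n) ℝ} {lam ε : ℝ}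
  {v : Euc n → ℝ}

lemma continuous_constCoeffOp (hv : ContDiff ℝ 4 v) : Continuous (constCoeffOp A ε v) := by
  have hbilap : Continuous (lap (lap v)) :=
    (contDiff_lap (contDiff_lap hv (m := 2) (by norm_num)) (m := 0) (by simp)).continuous
  have hpd2 (i j : Fin n) : Continuous (pd2 i j v) :=
    (contDiff_pd2 hv (m := 2) (by norm_num) i j).continuous
  unfold constCoeffOp
  fun_prop

lemma constCoeffOp_eqOn_zero (hK : IsClosed K) (hv : ContDiff ℝ 4 v)
    (hsupp : Set.EqOn v 0 (closure (upperHalfSpace k) \ K)) :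
    Set.EqOn (constCoeffOp A ε v) 0 (closure (upperHalfSpace k) \ K) := by
  intro x hx
  have hv2 : ContDiff ℝ 2 v := hv.of_le (by norm_num)
  have hlap := eqOn_lap_of_eqOn_zero (isOpen_upperHalfSpace k) hK hv2 hsupp
  have hbilap := eqOn_lap_of_eqOn_zero (isOpen_upperHalfSpace k) hK
    (contDiff_lap hv (by norm_num)) hlap
  have hpd2 (i j : Fin n) : pd2 i j v x = 0 :=
    eqOn_pd2_of_eqOn_zero (isOpen_upperHalfSpace k) hK hv2 hsupp i j hx
  simp [constCoeffOp, hbilap hx, hpd2]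

lemma integral_hess_contraction_mul_lap (hK : IsCompact K) (hv : ContDiff ℝ 3 v)
    (hsupp : Set.EqOn v 0 (closure (upperHalfSpace k) \ K))
    (hbd : Set.EqOn v 0 {x | x k = 0}) :
    ∫ x in K ∩ upperHalfSpace k, (∑ i, ∑ j, A i j * pd2 i j v x) * lap v x =
      ∑ l, ∫ x in K ∩ upperHalfSpace k, ∑ i, ∑ j, A i j * pd2 i l v x * pd2 j l v x := by
  have hbdd : IsBounded (K ∩ upperHalfSpace k) := hK.isBounded.subset Set.inter_subset_left
  have hpd2 (i j : Fin n) : Continuous (pd2 i j v) :=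
    (contDiff_pd2 hv (m := 1) (by norm_num) i j).continuous
  have integral_sum_sum {F : Fin n → Fin n → Euc n → ℝ} (hF : ∀ i j, Continuous (F i j)) :
      ∫ x in K ∩ upperHalfSpace k, ∑ i, ∑ j, F i j x =
        ∑ i, ∑ j, ∫ x in K ∩ upperHalfSpace k, F i j x := by
    rw [integral_finsetSum _ fun i _ => integrableOn_of_isBounded hbdd (by fun_prop)]
    exact Finset.sum_congr rfl fun i _ =>
      integral_finsetSum _ fun j _ => integrableOn_of_isBounded hbdd (hF i j)
  simp only [lap, Finset.mul_sum, Finset.sum_mul]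
  rw [integral_finsetSum _ fun l _ => integrableOn_of_isBounded hbdd (by fun_prop)]
  refine Finset.sum_congr rfl fun l _ => ?_
  rw [integral_sum_sum (by fun_prop), integral_sum_sum (by fun_prop)]
  refine Finset.sum_congr rfl fun i _ => Finset.sum_congr rfl fun j _ => ?_
  simp only [mul_assoc, integral_const_mul, integral_pd2_mul_pd2 hK hv hsupp hbd]

lemma mul_hessL2sq_le_integral (hK : IsCompact K)
    (hell : ∀ ξ : Euc n, lam * ‖ξ‖ ^ 2 ≤ ∑ i, ∑ j, A i j * ξ i * ξ j) (hv : ContDiff ℝ 3 v)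
    (hsupp : Set.EqOn v 0 (closure (upperHalfSpace k) \ K))
    (hbd : Set.EqOn v 0 {x | x k = 0}) :
    lam * hessL2sq (K ∩ upperHalfSpace k) v ≤
      ∫ x in K ∩ upperHalfSpace k, (∑ i, ∑ j, A i j * pd2 i j v x) * lap v x := by
  have hbdd : IsBounded (K ∩ upperHalfSpace k) := hK.isBounded.subset Set.inter_subset_left
  have hpd2 (i j : Fin n) : Continuous (pd2 i j v) :=
    (contDiff_pd2 hv (m := 1) (by norm_num) i j).continuous
  rw [integral_hess_contraction_mul_lap hK hv hsupp hbd, hessL2sq, Finset.sum_comm,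
    Finset.mul_sum]
  refine Finset.sum_le_sum fun l _ => ?_
  simp only [L2sq]
  rw [← integral_finsetSum _ fun i _ => integrableOn_of_isBounded hbdd (by fun_prop),
    ← integral_const_mul]
  refine integral_mono (integrableOn_of_isBounded hbdd (by fun_prop))
    (integrableOn_of_isBounded hbdd (by fun_prop)) fun x => ?_
  simpa [EuclideanSpace.norm_sq_eq] using hell (WithLp.toLp 2 fun i => pd2 i l v x)

lemma energy_le_integral (hK : IsCompact K)
    (hell : ∀ ξ : Euc n, lam * ‖ξ‖ ^ 2 ≤ ∑ i, ∑ j, A i j * ξ i * ξ j) (hv : ContDiff ℝ 4 v)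
    (hsupp : Set.EqOn v 0 (closure (upperHalfSpace k) \ K))
    (hbd : Set.EqOn v 0 {x | x k = 0}) (hbd_lap : Set.EqOn (lap v) 0 {x | x k = 0}) :
    ε * gradL2sq (K ∩ upperHalfSpace k) (lap v) + lam * hessL2sq (K ∩ upperHalfSpace k) v ≤
      ∫ x in K ∩ upperHalfSpace k, constCoeffOp A ε v x * -lap v x := by
  have hbdd : IsBounded (K ∩ upperHalfSpace k) := hK.isBounded.subset Set.inter_subset_left
  have hlap : ContDiff ℝ 2 (lap v) := contDiff_lap hv (by norm_num)
  have hbilap : Continuous (lap (lap v)) := (contDiff_lap hlap (m := 0) (by simp)).continuous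
  have hpd2 (i j : Fin n) : Continuous (pd2 i j v) :=
    (contDiff_pd2 hv (m := 2) (by norm_num) i j).continuous
  have hgrad := integral_mul_lap_self hK hlap
    (eqOn_lap_of_eqOn_zero (isOpen_upperHalfSpace k) hK.isClosed (hv.of_le (by norm_num)) hsupp)
    hbd_lap
  have hhess := mul_hessL2sq_le_integral hK hell (hv.of_le (by norm_num)) hsupp hbd
  have hsplit (x : Euc n) : constCoeffOp A ε v x * -lap v x =
      (∑ i, ∑ j, A i j * pd2 i j v x) * lap v x - ε * (lap v x * lap (lap v) x) := by
    rw [constCoeffOp]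
    ring
  simp only [hsplit]
  rw [integral_sub (integrableOn_of_isBounded hbdd (by fun_prop))
    (integrableOn_of_isBounded hbdd (by fun_prop)), integral_const_mul, hgrad]
  linarith

lemma two_mul_energy_le (hK : IsCompact K) (hlam : 0 < lam)
    (hell : ∀ ξ : Euc n, lam * ‖ξ‖ ^ 2 ≤ ∑ i, ∑ j, A i j * ξ i * ξ j) (hv : ContDiff ℝ 4 v)
    (hsupp : Set.EqOn v 0 (closure (upperHalfSpace k) \ K))
    (hbd : Set.EqOn v 0 {x | x k = 0}) (hbd_lap : Set.EqOn (lap v) 0 {x | x k = 0}) :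
    2 * (ε * gradL2sq (K ∩ upperHalfSpace k) (lap v)) +
        lam * hessL2sq (K ∩ upperHalfSpace k) v ≤
      n / lam * L2sq (K ∩ upperHalfSpace k) (constCoeffOp A ε v) := by
  have hbdd : IsBounded (K ∩ upperHalfSpace k) := hK.isBounded.subset Set.inter_subset_left
  have hn : (0 : ℝ) < n := by exact_mod_cast k.pos
  have hlap : Continuous (lap v) := (contDiff_lap hv (m := 2) (by norm_num)).continuous
  have henergy := energy_le_integral (ε := ε) hK hell hv hsupp hbd hbd_lap
  have hyoung := two_mul_integral_mul_le hbdd (continuous_constCoeffOp (A := A) (ε := ε) hv)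
    hlap.neg (div_pos hn hlam)
  have hneg : L2sq (K ∩ upperHalfSpace k) (-lap v) = L2sq (K ∩ upperHalfSpace k) (lap v) := by
    simp [L2sq]
  have hlap_le : (n / lam)⁻¹ * L2sq (K ∩ upperHalfSpace k) (-lap v) ≤
      lam * hessL2sq (K ∩ upperHalfSpace k) v := by
    rw [hneg, inv_div, div_mul_eq_mul_div, div_le_iff₀ hn, mul_assoc, mul_comm _ (n : ℝ)]
    gcongr
    exact L2sq_lap_le hbdd (hv.of_le (by norm_num))
  simp only [Pi.neg_apply] at hyoung
  linarith

end ConstantCoefficients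

lemma sqrt_mul_sqrt_le_of_mul_le {a b c d : ℝ} (ha : 0 ≤ a) (hc : 0 ≤ c) (h : a * b ≤ c * d) :
    √a * √b ≤ √c * √d := by
  rw [← Real.sqrt_mul ha, ← Real.sqrt_mul hc]
  exact Real.sqrt_le_sqrt h

theorem stmt19_general {k : Fin n} {U K : Set (Euc n)} (hK : IsCompact K) (hKU : K ⊆ U)
    {A : Matrix (Fin n) (Fin n) ℝ} {lam : ℝ} (hlam : 0 < lam)
    (hell : ∀ ξ : Euc n, lam * ‖ξ‖ ^ 2 ≤ ∑ i, ∑ j, A i j * ξ i * ξ j) {ε : ℝ} (hε : 0 ≤ ε)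
    {v : Euc n → ℝ} (hv : ContDiff ℝ 4 v) (hsupp : ∀ x : Euc n, 0 ≤ x k → x ∉ K → v x = 0)
    (hbd : ∀ x ∈ U, x k = 0 → v x = 0 ∧ lap v x = 0) :
    √ε * √(gradL2sq (U ∩ upperHalfSpace k) (lap v)) +
        √lam * √(hessL2sq (U ∩ upperHalfSpace k) v) ≤
      2 * √(n / lam) * L2norm (U ∩ upperHalfSpace k) (constCoeffOp A ε v) := by
  have hv2 : ContDiff ℝ 2 v := hv.of_le (by norm_num)
  have hsupp' : Set.EqOn v 0 (closure (upperHalfSpace k) \ K) := fun x hx =>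
    hsupp x (mem_closure_upperHalfSpace.1 hx.1) hx.2
  have hsupp_lap : Set.EqOn (lap v) 0 (closure (upperHalfSpace k) \ K) :=
    eqOn_lap_of_eqOn_zero (isOpen_upperHalfSpace k) hK.isClosed hv2 hsupp'
  have hflat {w : Euc n → ℝ} (hw : Set.EqOn w 0 (closure (upperHalfSpace k) \ K))
      (hwU : ∀ x ∈ U, x k = 0 → w x = 0) : Set.EqOn w 0 {x | x k = 0} := by
    intro x (hx : x k = 0)
    by_cases hxU : x ∈ U
    · exact hwU x hxU hx
    · exact hw ⟨mem_closure_upperHalfSpace.2 hx.ge, fun hxK => hxU (hKU hxK)⟩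
  have henergy := two_mul_energy_le (ε := ε) hK hlam hell hv hsupp'
    (hflat hsupp' fun x hxU hx => (hbd x hxU hx).1)
    (hflat hsupp_lap fun x hxU hx => (hbd x hxU hx).2)
  rw [L2norm,
    gradL2sq_inter_eq_of_subset hK.isClosed hKU (contDiff_lap hv (by norm_num)) hsupp_lap,
    hessL2sq_inter_eq_of_subset hK.isClosed hKU hv2 hsupp',
    L2sq_inter_eq_of_subset hKU (constCoeffOp_eqOn_zero hK.isClosed hv hsupp')]
  have hgrad_nonneg := mul_nonneg hε (gradL2sq_nonneg (s := K ∩ upperHalfSpace k) (f := lap v))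
  have hhess_nonneg := mul_nonneg hlam.le (hessL2sq_nonneg (s := K ∩ upperHalfSpace k) (f := v))
  have hgrad_le : √ε * √(gradL2sq (K ∩ upperHalfSpace k) (lap v)) ≤
      √(n / lam) * √(L2sq (K ∩ upperHalfSpace k) (constCoeffOp A ε v)) :=
    sqrt_mul_sqrt_le_of_mul_le hε (by positivity) (by linarith)
  have hhess_le : √lam * √(hessL2sq (K ∩ upperHalfSpace k) v) ≤
      √(n / lam) * √(L2sq (K ∩ upperHalfSpace k) (constCoeffOp A ε v)) :=
    sqrt_mul_sqrt_le_of_mul_le hlam.le (by positivity) (by linarith)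
  linarith

/-- odd-reflection boundary estimate on a half ball `B⁺ = B ∩ {x_k > 0}`
(ball centered on the hyperplane `{x_k = 0}`): for `v` vanishing near the curved part
of `∂B⁺` with `v = Δv = 0` on the flat part,
`√ε‖∇Δv‖_{L²(B⁺)} + √λ‖D²v‖_{L²(B⁺)} ≤ C‖L₀^ε v‖_{L²(B⁺)}`, `C` independent of `ε`. -/
theorem stmt19 (n : ℕ) (k : Fin n) (c : Euc n) (hc : c k = 0)
    (r : ℝ) (hr : 0 < r)
    (A : Matrix (Fin n) (Fin n) ℝ) (hA : A.IsSymm)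
    (lam : ℝ) (hlam : 0 < lam)
    (hell : ∀ ξ : Euc n, lam * ‖ξ‖ ^ 2 ≤ ∑ i, ∑ j, A i j * ξ i * ξ j) :
    ∃ C > 0, ∀ ε : ℝ, 0 < ε →
      ∀ v : Euc n → ℝ, ContDiff ℝ (⊤ : ℕ∞) v →
      (∃ r' : ℝ, r' < r ∧ 0 < r' ∧
        ∀ x : Euc n, v x ≠ 0 → 0 ≤ x k → x ∈ Metric.closedBall c r') →
      (∀ x : Euc n, x k = 0 → x ∈ Metric.ball c r → v x = 0 ∧ lap v x = 0) →
      Real.sqrt ε *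
          Real.sqrt (gradL2sq (Metric.ball c r ∩ {x : Euc n | 0 < x k}) (lap v)) +
        Real.sqrt lam *
          Real.sqrt (hessL2sq (Metric.ball c r ∩ {x : Euc n | 0 < x k}) v) ≤
      C * L2norm (Metric.ball c r ∩ {x : Euc n | 0 < x k})
        (fun x => ε * lap (lap v) x - ∑ i, ∑ j, A i j * pd2 i j v x) := by
  have hn : (0 : ℝ) < n := by exact_mod_cast k.pos
  refine ⟨2 * √(n / lam), by positivity, fun ε hε v hv ⟨r', hr', _, hsupp⟩ hbd => ?_⟩
  have hv4 : ContDiff ℝ 4 v := hv.of_le (WithTop.coe_le_coe.2 (le_top : (4 : ℕ∞) ≤ ⊤))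
  exact stmt19_general (isCompact_closedBall c r') (Metric.closedBall_subset_ball hr') hlam hell
    hε.le hv4 (fun x hx hxK => by_contra fun h => hxK (hsupp x h hx)) fun x hxU hx => hbd x hx hxU
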